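/- There exist two smooth embeddings K₁, K₂ : 𝕊¹ → ℝ³ such that: (a) K₁ and K₂ are strongly invertible Legendrian knots; (b) both are unknotted (each is connected to the standard round circle θ ↦ (cos θ, sin θ, 0) by a smooth family of embeddings of 𝕊¹ into ℝ³); (c) K₁ and K₂ are connected by a smooth family of Legendrian embeddings of 𝕊¹ into ℝ³ (they are isotopic as unoriented Legendrian knots); (d) K₁ and K₂ are connected by a smooth family of strongly invertible embeddings (they are equivalent as strongly invertible knots); but (e) there is no smooth map H : ℝ × 𝕊¹ → ℝ³ such that H(t,·) is a strongly invertible Legendrian knot for every t ∈ [0,1], H(0,·) = K₁, and H(1,·) has the same image as K₂. That is, K₁ and K₂ are not equivalent as strongly invertible Legendrian knots. -/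

import Mathlib

open scoped Manifold

noncomputable section

/-- ℝ³ with coordinates (x, y, z). -/
abbrev R3 : Type := ℝ × ℝ × ℝ

/-- 𝕊¹, the unit circle in ℝ². -/
abbrev S1 : Type := Metric.sphere (0 : EuclideanSpace ℝ (Fin 2)) 1

/-- The involution τ(x,y,z) = (x, −y, −z). -/
def tau (p : R3) : R3 := (p.1, -p.2.1, -p.2.2)

/-- The contact form of the standard contact structure: α_p(v) = v_z − p_y · v_x. -/
def alphaForm (p v : R3) : ℝ := v.2.2 - p.2.1 * v.1

/-- The x-axis {(x,0,0) : x ∈ ℝ} ⊆ ℝ³, the fixed-point set of τ. -/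
def xAxisSet : Set R3 := {p | p.2.1 = 0 ∧ p.2.2 = 0}

/-- A knot: a smooth injective immersion 𝕊¹ → ℝ³. -/
def IsKnot (K : S1 → R3) : Prop :=
  ContMDiff (𝓡 1) 𝓘(ℝ, R3) (⊤ : ℕ∞) K ∧
  Function.Injective K ∧
  ∀ s, Function.Injective (mfderiv (𝓡 1) 𝓘(ℝ, R3) K s)

/-- A Legendrian knot: a knot all of whose tangent vectors lie in the contact planes. -/
def IsLegendrianKnot (K : S1 → R3) : Prop :=
  IsKnot K ∧
    ∀ s (v : EuclideanSpace ℝ (Fin 1)),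
      alphaForm (K s) (mfderiv (𝓡 1) 𝓘(ℝ, R3) K s v) = 0

/-- A strongly invertible knot: τ maps the image onto itself, and the image meets the
x-axis in exactly two points. -/
def IsStronglyInvertibleKnot (K : S1 → R3) : Prop :=
  IsKnot K ∧ tau '' Set.range K = Set.range K ∧ (Set.range K ∩ xAxisSet).encard = 2

/-- A smooth family of maps 𝕊¹ → ℝ³, i.e. a smooth map ℝ × 𝕊¹ → ℝ³. -/
def IsSmoothFamily (H : ℝ × S1 → R3) : Prop :=
  ContMDiff ((𝓘(ℝ, ℝ)).prod (𝓡 1)) 𝓘(ℝ, R3) (⊤ : ℕ∞) H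

/-- The standard round circle θ ↦ (cos θ, sin θ, 0), parametrized by the unit circle. -/
def roundCircle : S1 → R3 :=
  fun s => ((s : EuclideanSpace ℝ (Fin 2)) 0, (s : EuclideanSpace ℝ (Fin 2)) 1, 0)

theorem factS1 : Fact (Module.finrank ℝ (EuclideanSpace ℝ (Fin 2)) = 1 + 1) :=
  Fact.mk finrank_euclideanSpace_fin

lemma coe_S1_contMDiff : ContMDiff (𝓡 1) 𝓘(ℝ, EuclideanSpace ℝ (Fin 2)) (⊤ : ℕ∞)
    (fun s : S1 => (s : EuclideanSpace ℝ (Fin 2))) :=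
  @contMDiff_coe_sphere (EuclideanSpace ℝ (Fin 2)) _ _ (⊤ : ℕ∞) 1 factS1

def E (θ : ℝ) : S1 := ⟨!₂[Real.cos θ, Real.sin θ], by
  simp [EuclideanSpace.norm_eq]⟩

lemma E_zero (θ : ℝ) : (E θ : EuclideanSpace ℝ (Fin 2)) 0 = Real.cos θ := by simp [E]
lemma E_one (θ : ℝ) : (E θ : EuclideanSpace ℝ (Fin 2)) 1 = Real.sin θ := by simp [E]

lemma S1_sq (s : S1) : (s : EuclideanSpace ℝ (Fin 2)) 0 ^ 2 + (s : EuclideanSpace ℝ (Fin 2)) 1 ^ 2 = 1 := by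
  have := s.2
  rw [mem_sphere_zero_iff_norm, EuclideanSpace.norm_eq, Real.sqrt_eq_one] at this
  simpa [Fin.sum_univ_two] using this

lemma S1_ext {s s' : S1} (h0 : (s : EuclideanSpace ℝ (Fin 2)) 0 = (s' : EuclideanSpace ℝ (Fin 2)) 0)
    (h1 : (s : EuclideanSpace ℝ (Fin 2)) 1 = (s' : EuclideanSpace ℝ (Fin 2)) 1) : s = s' := by
  apply Subtype.ext
  ext i
  fin_cases i
  · exact h0
  · exact h1

lemma exists_S1 {a b : ℝ} (h : a ^ 2 + b ^ 2 = 1) : ∃ s : S1,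
    (s : EuclideanSpace ℝ (Fin 2)) 0 = a ∧ (s : EuclideanSpace ℝ (Fin 2)) 1 = b :=
  ⟨⟨!₂[a, b], by simp [EuclideanSpace.norm_eq, h]⟩, by simp, by simp⟩

lemma E_add_two_pi (θ : ℝ) : E (θ + 2 * Real.pi) = E θ := by
  apply S1_ext <;> simp [E_zero, E_one]

lemma E_eq_iff {θ θ' : ℝ} : E θ = E θ' ↔ ∃ n : ℤ, θ = θ' + n * (2 * Real.pi) := by
  constructor
  · intro h
    have h0 : Real.cos θ = Real.cos θ' := by rw [← E_zero, h, E_zero]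
    have h1 : Real.sin θ = Real.sin θ' := by rw [← E_one, h, E_one]
    have : (θ : Real.Angle) = θ' := Real.Angle.cos_sin_inj h0 h1
    rw [Real.Angle.angle_eq_iff_two_pi_dvd_sub] at this
    obtain ⟨k, hk⟩ := this
    exact ⟨k, by linarith⟩
  · rintro ⟨n, rfl⟩
    apply S1_ext <;> simp [E_zero, E_one]

lemma E_surj_Icc (c : ℝ) (s : S1) : ∃ θ ∈ Set.Ico c (c + 2 * Real.pi), E θ = s := by
  have h := S1_sq s
  set a := (s : EuclideanSpace ℝ (Fin 2)) 0 with ha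
  set b := (s : EuclideanSpace ℝ (Fin 2)) 1 with hb
  have hn : ‖(⟨a, b⟩ : ℂ)‖ = 1 := by
    rw [Complex.norm_def, Complex.normSq_mk, ← sq, ← sq, h, Real.sqrt_one]
  have h0 : (⟨a, b⟩ : ℂ) ≠ 0 := by intro h; rw [h] at hn; simp at hn
  have hs : E (Complex.arg ⟨a, b⟩) = s := by
    apply S1_ext
    · rw [E_zero, Complex.cos_arg h0, hn]; simp [ha]
    · rw [E_one, Complex.sin_arg, hn]; simp [hb]
  refine ⟨toIcoMod Real.two_pi_pos c (Complex.arg ⟨a, b⟩), toIcoMod_mem_Ico _ _ _, ?_⟩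
  rw [← hs, E_eq_iff]
  refine ⟨-toIcoDiv Real.two_pi_pos c (Complex.arg ⟨a, b⟩), ?_⟩
  have := toIcoMod_add_toIcoDiv_zsmul Real.two_pi_pos c (Complex.arg ⟨a, b⟩)
  rw [zsmul_eq_mul] at this
  push_cast
  linarith

lemma coe_E_contDiff : ContDiff ℝ (⊤ : ℕ∞) (fun θ : ℝ => (!₂[Real.cos θ, Real.sin θ] : EuclideanSpace ℝ (Fin 2))) := by
  rw [contDiff_euclidean]
  intro i
  fin_cases i
  · simpa using Real.contDiff_cos
  · simpa using Real.contDiff_sin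

lemma E_contMDiff : ContMDiff 𝓘(ℝ, ℝ) (𝓡 1) (⊤ : ℕ∞) E := by
  exact @ContMDiff.codRestrict_sphere (EuclideanSpace ℝ (Fin 2)) _ _ (⊤ : ℕ∞) _ _ _ _ _ _ _ _ _ _ 1 factS1
    _ coe_E_contDiff.contMDiff _

lemma E_mfderiv_ne (θ : ℝ) : mfderiv 𝓘(ℝ, ℝ) (𝓡 1) E θ (1 : ℝ) ≠ 0 := by
  intro h
  have h1 : MDifferentiableAt 𝓘(ℝ, ℝ) (𝓡 1) E θ := (E_contMDiff θ).mdifferentiableAt (by simp)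
  have h2 : MDifferentiableAt (𝓡 1) 𝓘(ℝ, EuclideanSpace ℝ (Fin 2)) (fun s : S1 => (s : EuclideanSpace ℝ (Fin 2))) (E θ) :=
    (coe_S1_contMDiff (E θ)).mdifferentiableAt (by simp)
  have h3 := mfderiv_comp θ h2 h1
  have h4 : mfderiv 𝓘(ℝ, ℝ) 𝓘(ℝ, EuclideanSpace ℝ (Fin 2)) ((fun s : S1 => (s : EuclideanSpace ℝ (Fin 2))) ∘ E) θ (1:ℝ) = 0 := by
    rw [h3]
    change (mfderiv (𝓡 1) 𝓘(ℝ, EuclideanSpace ℝ (Fin 2)) (fun s : S1 => (s : EuclideanSpace ℝ (Fin 2))) (E θ)) (mfderiv 𝓘(ℝ, ℝ) (𝓡 1) E θ (1 : ℝ)) = 0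
    rw [h]; simp
  rw [mfderiv_eq_fderiv] at h4
  have hd : DifferentiableAt ℝ ((fun s : S1 => (s : EuclideanSpace ℝ (Fin 2))) ∘ E) θ :=
    (coe_E_contDiff.differentiable (by simp)) θ
  have h5 := hd.hasFDerivAt.hasDerivAt
  have h6 := fun i => (EuclideanSpace.proj (𝕜 := ℝ) i).hasFDerivAt.comp_hasDerivAt θ h5
  have h7 := (h6 0).unique ((Real.hasDerivAt_cos θ).congr_of_eventuallyEq (.of_forall fun u => E_zero u))
  have h8 := (h6 1).unique ((Real.hasDerivAt_sin θ).congr_of_eventuallyEq (.of_forall fun u => E_one u))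
  have h4' : (fderiv ℝ ((fun s : S1 => (s : EuclideanSpace ℝ (Fin 2))) ∘ E) θ) 1 = 0 := h4
  rw [h4'] at h7 h8
  have := Real.sin_sq_add_cos_sq θ
  simp at h7 h8
  rw [h7, ← h8] at this
  norm_num at this

/-- The velocity vector of the standard parametrization of the circle. -/
def Evel (θ : ℝ) : EuclideanSpace ℝ (Fin 1) := mfderiv 𝓘(ℝ, ℝ) (𝓡 1) E θ (1 : ℝ)

lemma Evel_ne (θ : ℝ) : Evel θ ≠ 0 := E_mfderiv_ne θ

/-- The derivative of a map from the circle, as a map between vector spaces. -/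
def mfd (K : S1 → R3) (s : S1) : EuclideanSpace ℝ (Fin 1) →L[ℝ] R3 :=
  mfderiv (𝓡 1) 𝓘(ℝ, R3) K s

lemma hasDerivAt_comp_E {K : S1 → R3} (hK : ContMDiff (𝓡 1) 𝓘(ℝ, R3) (⊤ : ℕ∞) K) (θ : ℝ) :
    HasDerivAt (fun u => K (E u)) (mfd K (E θ) (Evel θ)) θ := by
  have h1 : MDifferentiableAt 𝓘(ℝ, ℝ) (𝓡 1) E θ := (E_contMDiff θ).mdifferentiableAt (by simp)
  have h2 : MDifferentiableAt (𝓡 1) 𝓘(ℝ, R3) K (E θ) := (hK (E θ)).mdifferentiableAt (by simp)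
  have h3 := h2.hasMFDerivAt.comp θ h1.hasMFDerivAt
  have h4 : HasFDerivAt (fun u => K (E u)) ((mfd K (E θ)).comp
    (mfderiv 𝓘(ℝ, ℝ) (𝓡 1) E θ : ℝ →L[ℝ] EuclideanSpace ℝ (Fin 1))) θ := h3.hasFDerivAt
  exact h4.hasDerivAt

lemma exists_smul_Evel (θ : ℝ) (v : EuclideanSpace ℝ (Fin 1)) : ∃ c : ℝ, c • Evel θ = v :=
  exists_smul_eq_of_finrank_eq_one (by simp) (Evel_ne θ) v

lemma E_surj (s : S1) : ∃ θ, E θ = s := by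
  obtain ⟨θ, -, h⟩ := E_surj_Icc 0 s
  exact ⟨θ, h⟩

lemma isKnot_of_leftInverse {K : S1 → R3} (hK : ContMDiff (𝓡 1) 𝓘(ℝ, R3) (⊤ : ℕ∞) K)
    (L0 L1 : R3 → ℝ) (d0 : Differentiable ℝ L0) (d1 : Differentiable ℝ L1)
    (h0 : ∀ s : S1, L0 (K s) = (s : EuclideanSpace ℝ (Fin 2)) 0)
    (h1 : ∀ s : S1, L1 (K s) = (s : EuclideanSpace ℝ (Fin 2)) 1) : IsKnot K := by
  refine ⟨hK, fun s s' h => S1_ext (by rw [← h0, h, h0]) (by rw [← h1, h, h1]), fun s => ?_⟩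
  obtain ⟨θ, rfl⟩ := E_surj s
  change Function.Injective (mfd K (E θ))
  rw [injective_iff_map_eq_zero]
  intro v hv
  obtain ⟨c, rfl⟩ := exists_smul_Evel θ v
  have hd := hasDerivAt_comp_E hK θ
  rw [map_smul] at hv
  rcases smul_eq_zero.1 hv with hc | hc
  · simp [hc]
  · exfalso
    rw [hc] at hd
    have e0 := ((d0 (K (E θ))).hasFDerivAt.comp_hasDerivAt θ hd).unique
      ((Real.hasDerivAt_cos θ).congr_of_eventuallyEq (.of_forall fun u => by
        simp only [Function.comp]; rw [h0, E_zero]))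
    have e1 := ((d1 (K (E θ))).hasFDerivAt.comp_hasDerivAt θ hd).unique
      ((Real.hasDerivAt_sin θ).congr_of_eventuallyEq (.of_forall fun u => by
        simp only [Function.comp]; rw [h1, E_one]))
    have := Real.sin_sq_add_cos_sq θ
    simp at e0 e1
    rw [e0, ← e1] at this
    norm_num at this

lemma isLegendrian_of {K : S1 → R3} (hK : IsKnot K)
    (h : ∀ θ, alphaForm (K (E θ)) (deriv (fun u => K (E u)) θ) = 0) : IsLegendrianKnot K := by
  refine ⟨hK, fun s v => ?_⟩
  obtain ⟨θ, rfl⟩ := E_surj s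
  obtain ⟨c, rfl⟩ := exists_smul_Evel θ v
  have h1 := h θ
  rw [(hasDerivAt_comp_E hK.1 θ).deriv] at h1
  change alphaForm (K (E θ)) (mfd K (E θ) (c • Evel θ)) = 0
  rw [map_smul]
  unfold alphaForm at h1 ⊢
  simp only [Prod.smul_fst, Prod.smul_snd, smul_eq_mul]
  linear_combination c * h1

lemma IsKnot.deriv_ne {K : S1 → R3} (hK : IsKnot K) (θ : ℝ) : deriv (fun u => K (E u)) θ ≠ 0 := by
  rw [(hasDerivAt_comp_E hK.1 θ).deriv]
  intro h
  exact Evel_ne θ (hK.2.2 (E θ) (h.trans (map_zero _).symm))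

lemma IsLegendrianKnot.alpha {K : S1 → R3} (hK : IsLegendrianKnot K) (θ : ℝ) :
    alphaForm (K (E θ)) (deriv (fun u => K (E u)) θ) = 0 := by
  rw [(hasDerivAt_comp_E hK.1.1 θ).deriv]
  exact hK.2 _ _

/-! The explicit family of strongly invertible knots. -/

/-- Polynomial family. -/
def FF (l m a b : ℝ) : R3 :=
  (a * (1 - 4 * m ^ 2 * b ^ 2), b * (1 - 4 * l ^ 2 * a ^ 2),
    b * (l * a) * (1 - l ^ 2 * a ^ 2) - 3 * a * m ^ 3 * b ^ 3)

/-- The same family, the source circle being rotated by the angle `p`. -/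
def HH (l m p : ℝ) (s : S1) : R3 :=
  FF l m (Real.cos p * (s : EuclideanSpace ℝ (Fin 2)) 0 - Real.sin p * (s : EuclideanSpace ℝ (Fin 2)) 1)
    (Real.sin p * (s : EuclideanSpace ℝ (Fin 2)) 0 + Real.cos p * (s : EuclideanSpace ℝ (Fin 2)) 1)

/-- Coordinates on the ambient plane. -/
lemma contMDiff_coords : ContMDiff (𝓡 1) 𝓘(ℝ, ℝ × ℝ) (⊤ : ℕ∞)
    (fun s : S1 => ((s : EuclideanSpace ℝ (Fin 2)) 0, (s : EuclideanSpace ℝ (Fin 2)) 1)) := by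
  have h : ContDiff ℝ (⊤ : ℕ∞) (fun v : EuclideanSpace ℝ (Fin 2) => (v 0, v 1)) := by fun_prop
  exact h.contMDiff.comp coe_S1_contMDiff

lemma smoothFamily_of {f : ℝ × (ℝ × ℝ) → R3} (hf : ContDiff ℝ (⊤ : ℕ∞) f) :
    IsSmoothFamily (fun q : ℝ × S1 =>
      f (q.1, ((q.2 : EuclideanSpace ℝ (Fin 2)) 0, (q.2 : EuclideanSpace ℝ (Fin 2)) 1))) := by
  have h1 : ContMDiff ((𝓘(ℝ, ℝ)).prod (𝓡 1)) 𝓘(ℝ, ℝ × (ℝ × ℝ)) (⊤ : ℕ∞) (fun q : ℝ × S1 =>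
      (q.1, ((q.2 : EuclideanSpace ℝ (Fin 2)) 0, (q.2 : EuclideanSpace ℝ (Fin 2)) 1))) :=
    contMDiff_fst.prodMk_space (contMDiff_coords.comp contMDiff_snd)
  exact hf.contMDiff.comp h1

lemma smooth_slice {H : ℝ × S1 → R3} (hH : IsSmoothFamily H) (t : ℝ) :
    ContMDiff (𝓡 1) 𝓘(ℝ, R3) (⊤ : ℕ∞) (fun s => H (t, s)) :=
  ContMDiff.comp hH (contMDiff_const.prodMk contMDiff_id)

lemma HH_smoothFamily {l m p : ℝ → ℝ} (hl : ContDiff ℝ (⊤ : ℕ∞) l) (hm : ContDiff ℝ (⊤ : ℕ∞) m)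
    (hp : ContDiff ℝ (⊤ : ℕ∞) p) : IsSmoothFamily (fun q => HH (l q.1) (m q.1) (p q.1) q.2) := by
  have : ContDiff ℝ (⊤ : ℕ∞) (fun q : ℝ × (ℝ × ℝ) => FF (l q.1) (m q.1)
      (Real.cos (p q.1) * q.2.1 - Real.sin (p q.1) * q.2.2)
      (Real.sin (p q.1) * q.2.1 + Real.cos (p q.1) * q.2.2)) := by
    unfold FF
    fun_prop
  exact smoothFamily_of this

lemma HH_smooth (l m p : ℝ) : ContMDiff (𝓡 1) 𝓘(ℝ, R3) (⊤ : ℕ∞) (HH l m p) :=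
  smooth_slice (HH_smoothFamily (l := fun _ => l) (m := fun _ => m) (p := fun _ => p)
    contDiff_const contDiff_const contDiff_const) 0

lemma HH_isKnot {l m : ℝ} (h : l = 0 ∨ m = 0) (p : ℝ) : IsKnot (HH l m p) := by
  have hcs := Real.sin_sq_add_cos_sq p
  rcases h with rfl | rfl
  · refine isKnot_of_leftInverse (HH_smooth _ _ p)
      (fun q => Real.cos p * ((1 + 4 * (m * q.2.1) ^ 2) * q.1 - 16 / 3 * (m * q.2.1) * q.2.2) + Real.sin p * q.2.1)
      (fun q => -Real.sin p * ((1 + 4 * (m * q.2.1) ^ 2) * q.1 - 16 / 3 * (m * q.2.1) * q.2.2) + Real.cos p * q.2.1)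
      (by fun_prop) (by fun_prop) ?_ ?_
    · intro s
      simp only [HH, FF]
      linear_combination (s : EuclideanSpace ℝ (Fin 2)) 0 * hcs
    · intro s
      simp only [HH, FF]
      linear_combination (s : EuclideanSpace ℝ (Fin 2)) 1 * hcs
  · refine isKnot_of_leftInverse (HH_smooth _ _ p)
      (fun q => Real.cos p * q.1 + Real.sin p * ((1 - 4 / 3 * (l * q.1) ^ 2) * q.2.1 + 16 / 3 * (l * q.1) * q.2.2))
      (fun q => -Real.sin p * q.1 + Real.cos p * ((1 - 4 / 3 * (l * q.1) ^ 2) * q.2.1 + 16 / 3 * (l * q.1) * q.2.2))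
      (by fun_prop) (by fun_prop) ?_ ?_
    · intro s
      simp only [HH, FF]
      linear_combination (s : EuclideanSpace ℝ (Fin 2)) 0 * hcs
    · intro s
      simp only [HH, FF]
      linear_combination (s : EuclideanSpace ℝ (Fin 2)) 1 * hcs

lemma HH_range (l m p : ℝ) : Set.range (HH l m p) = {q | ∃ a b : ℝ, a ^ 2 + b ^ 2 = 1 ∧ q = FF l m a b} := by
  have hcs := Real.sin_sq_add_cos_sq p
  ext q
  constructor
  · rintro ⟨s, rfl⟩
    refine ⟨_, _, ?_, rfl⟩
    have := S1_sq s
    linear_combination this + ((s : EuclideanSpace ℝ (Fin 2)) 0 ^ 2 + (s : EuclideanSpace ℝ (Fin 2)) 1 ^ 2) * hcs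
  · rintro ⟨a, b, hab, rfl⟩
    obtain ⟨s, h0, h1⟩ := exists_S1 (a := Real.cos p * a + Real.sin p * b) (b := -Real.sin p * a + Real.cos p * b)
      (by linear_combination hab + (a ^ 2 + b ^ 2) * hcs)
    refine ⟨s, ?_⟩
    unfold HH
    rw [h0, h1]
    congr 1
    · linear_combination a * hcs
    · linear_combination b * hcs

lemma FF_tau (l m a b : ℝ) : tau (FF l m a b) = FF l m a (-b) := by
  unfold tau FF
  ext <;> simp <;> ring

lemma HH_si {l m : ℝ} (h : l = 0 ∨ m = 0) (p : ℝ) : IsStronglyInvertibleKnot (HH l m p) := by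
  refine ⟨HH_isKnot h p, ?_, ?_⟩
  · rw [HH_range]
    ext q
    constructor
    · rintro ⟨_, ⟨a, b, hab, rfl⟩, rfl⟩
      exact ⟨a, -b, by simpa using hab, FF_tau _ _ _ _⟩
    · rintro ⟨a, b, hab, rfl⟩
      refine ⟨_, ⟨a, -b, by simpa using hab, rfl⟩, ?_⟩
      rw [FF_tau, neg_neg]
  · have : Set.range (HH l m p) ∩ xAxisSet = {((1, 0, 0) : R3), (-1, 0, 0)} := by
      rw [HH_range]
      ext q
      constructor
      · rintro ⟨⟨a, b, hab, rfl⟩, hy, hz⟩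
        have hb : b = 0 := by
          simp only [FF] at hy hz
          rcases h with rfl | rfl
          · linear_combination hy
          · linear_combination (1 - 4 / 3 * (l * a) ^ 2) * hy + 16 / 3 * (l * a) * hz
        subst hb
        have : (a - 1) * (a + 1) = 0 := by linear_combination hab
        rcases mul_eq_zero.1 this with h | h
        · left; have : a = 1 := by linarith
          subst this; simp [FF]
        · right; have : a = -1 := by linarith
          subst this; simp [FF]
      · rintro (rfl | rfl)
        · exact ⟨⟨1, 0, by norm_num, by simp [FF]⟩, by simp [xAxisSet]⟩
        · exact ⟨⟨-1, 0, by norm_num, by simp [FF]⟩, by simp [xAxisSet]⟩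
    rw [this]
    refine Set.encard_pair ?_
    intro h
    have := congrArg Prod.fst h
    norm_num at this

/-- The contact lift of the rotation of the `xy`-plane by the angle `p`. -/
def RR (p : ℝ) (q : R3) : R3 :=
  (Real.cos p * q.1 - Real.sin p * q.2.1, Real.sin p * q.1 + Real.cos p * q.2.1,
    q.2.2 + Real.sin p * Real.cos p * (q.1 ^ 2 - q.2.1 ^ 2) / 2 - Real.sin p ^ 2 * q.1 * q.2.1)

/-- The inverse of `RR p`. -/
def RRinv (p : ℝ) (q : R3) : R3 :=
  (Real.cos p * q.1 + Real.sin p * q.2.1, -Real.sin p * q.1 + Real.cos p * q.2.1,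
    q.2.2 - Real.sin p * Real.cos p * ((Real.cos p * q.1 + Real.sin p * q.2.1) ^ 2
        - (-Real.sin p * q.1 + Real.cos p * q.2.1) ^ 2) / 2
      + Real.sin p ^ 2 * (Real.cos p * q.1 + Real.sin p * q.2.1)
        * (-Real.sin p * q.1 + Real.cos p * q.2.1))

lemma RRinv_RR (p : ℝ) (q : R3) : RRinv p (RR p q) = q := by
  have hcs := Real.sin_sq_add_cos_sq p
  have hx : Real.cos p * (Real.cos p * q.1 - Real.sin p * q.2.1)
      + Real.sin p * (Real.sin p * q.1 + Real.cos p * q.2.1) = q.1 := by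
    linear_combination q.1 * hcs
  have hy : -Real.sin p * (Real.cos p * q.1 - Real.sin p * q.2.1)
      + Real.cos p * (Real.sin p * q.1 + Real.cos p * q.2.1) = q.2.1 := by
    linear_combination q.2.1 * hcs
  unfold RRinv RR
  ext
  · exact hx
  · exact hy
  · simp only [hx, hy]
    ring

lemma RR_K1_smoothFamily :
    IsSmoothFamily (fun q => RR (q.1 * (Real.pi / 2)) (HH 1 0 0 q.2)) := by
  have : ContDiff ℝ (⊤ : ℕ∞) (fun q : ℝ × (ℝ × ℝ) => RR (q.1 * (Real.pi / 2)) (FF 1 0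
      (Real.cos 0 * q.2.1 - Real.sin 0 * q.2.2)
      (Real.sin 0 * q.2.1 + Real.cos 0 * q.2.2))) := by
    unfold FF RR
    fun_prop
  exact smoothFamily_of this

lemma RR_K1_isKnot (t : ℝ) : IsKnot (fun s => RR (t * (Real.pi / 2)) (HH 1 0 0 s)) := by
  refine isKnot_of_leftInverse (smooth_slice RR_K1_smoothFamily t)
      (fun q => (RRinv (t * (Real.pi / 2)) q).1)
      (fun q => ((1 - 4 / 3 * (RRinv (t * (Real.pi / 2)) q).1 ^ 2) * (RRinv (t * (Real.pi / 2)) q).2.1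
        + 16 / 3 * (RRinv (t * (Real.pi / 2)) q).1 * (RRinv (t * (Real.pi / 2)) q).2.2))
      (by unfold RRinv; fun_prop) (by unfold RRinv; fun_prop) ?_ ?_
  · intro s
    simp only [RRinv_RR]
    simp [HH, FF]
  · intro s
    simp only [RRinv_RR]
    simp [HH, FF]
    ring

lemma K1_E (θ : ℝ) : HH 1 0 0 (E θ) = (Real.cos θ, Real.sin θ * (1 - 4 * Real.cos θ ^ 2),
    Real.sin θ * Real.cos θ * (1 - Real.cos θ ^ 2)) := by
  simp [HH, FF, E_zero, E_one]

lemma RR_K1_isLegendrian (t : ℝ) :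
    IsLegendrianKnot (fun s => RR (t * (Real.pi / 2)) (HH 1 0 0 s)) := by
  refine isLegendrian_of (RR_K1_isKnot t) fun θ => ?_
  set p := t * (Real.pi / 2)
  have hcs := Real.sin_sq_add_cos_sq p
  have hcs' := Real.sin_sq_add_cos_sq θ
  simp only [K1_E]
  have hc := Real.hasDerivAt_cos θ
  have hs := Real.hasDerivAt_sin θ
  have hx := hc
  have hy := hs.mul (((hc.pow 2).const_mul 4).const_sub 1)
  have hz := (hs.mul hc).mul ((hc.pow 2).const_sub 1)
  have hX := (hx.const_mul (Real.cos p)).sub (hy.const_mul (Real.sin p))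
  have hY := (hx.const_mul (Real.sin p)).add (hy.const_mul (Real.cos p))
  have hZ := (hz.add ((((hx.pow 2).sub (hy.pow 2)).const_mul (Real.sin p * Real.cos p)).div_const 2)).sub
    ((hx.const_mul (Real.sin p ^ 2)).mul hy)
  have hD := hX.prodMk (hY.prodMk hZ)
  have hD' := hD.deriv
  have he : (fun u => RR p (Real.cos u, Real.sin u * (1 - 4 * Real.cos u ^ 2),
    Real.sin u * Real.cos u * (1 - Real.cos u ^ 2))) = _ := rfl
  unfold RR at he ⊢
  erw [hD']
  unfold alphaForm
  simp
  set c := Real.cos p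
  set s := Real.sin p
  set a := Real.cos θ
  set b := Real.sin θ
  linear_combination -a ^ 2 * hcs' + b ^ 2 * (1 - 4 * a ^ 2) * hcs

lemma RR_zero (q : R3) : RR 0 q = q := by simp [RR]

lemma RR_one (s : S1) : RR (1 * (Real.pi / 2)) (HH 1 0 0 s) = HH 0 1 (Real.pi / 2) s := by
  rw [one_mul]
  simp only [RR, HH, FF, Real.cos_pi_div_two, Real.sin_pi_div_two, Real.cos_zero, Real.sin_zero]
  ext
  · simp
  · simp
  · simp; ring

lemma part_b1 : ∃ H : ℝ × S1 → R3, IsSmoothFamily H ∧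
        (∀ s, H (0, s) = HH 1 0 0 s) ∧ (∀ s, H (1, s) = roundCircle s) ∧
        ∀ t ∈ Set.Icc (0 : ℝ) 1, IsKnot fun s => H (t, s) := by
  refine ⟨_, HH_smoothFamily (l := fun t => 1 - t) (m := fun _ => 0) (p := fun _ => 0)
    (by fun_prop) (by fun_prop) (by fun_prop), ?_, ?_, ?_⟩
  · intro s; simp
  · intro s; simp [HH, FF, roundCircle]
  · intro t _; exact HH_isKnot (l := 1 - t) (m := 0) (Or.inr rfl) 0

lemma part_b2 : ∃ H : ℝ × S1 → R3, IsSmoothFamily H ∧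
        (∀ s, H (0, s) = HH 0 1 (Real.pi / 2) s) ∧ (∀ s, H (1, s) = roundCircle s) ∧
        ∀ t ∈ Set.Icc (0 : ℝ) 1, IsKnot fun s => H (t, s) := by
  refine ⟨_, HH_smoothFamily (l := fun _ => 0) (m := fun t => 1 - t) (p := fun t => (1 - t) * (Real.pi / 2))
    (by fun_prop) (by fun_prop) (by fun_prop), ?_, ?_, ?_⟩
  · intro s; simp
  · intro s; simp [HH, FF, roundCircle]
  · intro t _; exact HH_isKnot (l := 0) (m := 1 - t) (Or.inl rfl) ((1 - t) * (Real.pi / 2))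

lemma part_c : ∃ H : ℝ × S1 → R3, IsSmoothFamily H ∧
        (∀ s, H (0, s) = HH 1 0 0 s) ∧ (∀ s, H (1, s) = HH 0 1 (Real.pi / 2) s) ∧
        ∀ t ∈ Set.Icc (0 : ℝ) 1, IsLegendrianKnot fun s => H (t, s) := by
  refine ⟨_, RR_K1_smoothFamily, ?_, ?_, fun t _ => RR_K1_isLegendrian t⟩
  · intro s
    simp [RR_zero]
  · intro s
    exact RR_one s

lemma part_d : ∃ H : ℝ × S1 → R3, IsSmoothFamily H ∧
        (∀ s, H (0, s) = HH 1 0 0 s) ∧ (∀ s, H (1, s) = HH 0 1 (Real.pi / 2) s) ∧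
        ∀ t ∈ Set.Icc (0 : ℝ) 1, IsStronglyInvertibleKnot fun s => H (t, s) := by
  have h : ContDiff ℝ (⊤ : ℕ∞) Real.smoothTransition := Real.smoothTransition.contDiff
  refine ⟨_, HH_smoothFamily (l := fun t => Real.smoothTransition (1 - 2 * t))
    (m := fun t => Real.smoothTransition (2 * t - 1))
    (p := fun t => Real.smoothTransition (2 * t - 1) * (Real.pi / 2))
    (h.comp (by fun_prop)) (h.comp (by fun_prop)) ((h.comp (by fun_prop)).mul contDiff_const), ?_, ?_, ?_⟩
  · intro s
    have h1 : Real.smoothTransition (1 - 2 * 0) = 1 := Real.smoothTransition.one_of_one_le (by norm_num)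
    have h2 : Real.smoothTransition (2 * 0 - 1) = 0 := Real.smoothTransition.zero_of_nonpos (by norm_num)
    simp only [h1, h2, zero_mul]
  · intro s
    have h1 : Real.smoothTransition (1 - 2 * 1) = 0 := Real.smoothTransition.zero_of_nonpos (by norm_num)
    have h2 : Real.smoothTransition (2 * 1 - 1) = 1 := Real.smoothTransition.one_of_one_le (by norm_num)
    simp only [h1, h2, one_mul]
  · intro t _
    refine HH_si (l := Real.smoothTransition (1 - 2 * t)) (m := Real.smoothTransition (2 * t - 1)) ?_
      (Real.smoothTransition (2 * t - 1) * (Real.pi / 2))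
    rcases le_total t (1 / 2) with ht | ht
    · right; exact Real.smoothTransition.zero_of_nonpos (by linarith)
    · left; exact Real.smoothTransition.zero_of_nonpos (by linarith)

/-! Part (e): the invariants. -/

lemma family_derivs {H : ℝ × S1 → R3} (hH : IsSmoothFamily H) :
    ∃ D D2 : ℝ × ℝ → R3, Continuous D ∧ Continuous D2 ∧
      (Continuous fun q : ℝ × ℝ => H (q.1, E q.2)) ∧
      (∀ t θ, HasDerivAt (fun u => H (t, E u)) (D (t, θ)) θ) ∧
      (∀ t θ, HasDerivAt (fun u => D (t, u)) (D2 (t, θ)) θ) := by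
  have hG : ContDiff ℝ (⊤ : ℕ∞) (fun q : ℝ × ℝ => H (q.1, E q.2)) := by
    rw [← contMDiff_iff_contDiff]
    have h1 : ContMDiff 𝓘(ℝ, ℝ × ℝ) 𝓘(ℝ, ℝ) (⊤ : ℕ∞) (fun q : ℝ × ℝ => q.1) := contDiff_fst.contMDiff
    have h2 : ContMDiff 𝓘(ℝ, ℝ × ℝ) 𝓘(ℝ, ℝ) (⊤ : ℕ∞) (fun q : ℝ × ℝ => q.2) := contDiff_snd.contMDiff
    exact ContMDiff.comp hH (h1.prodMk (E_contMDiff.comp h2))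
  have key : ∀ G : ℝ × ℝ → R3, ContDiff ℝ (⊤ : ℕ∞) G →
      ContDiff ℝ (⊤ : ℕ∞) (fun q => fderiv ℝ G q (0, 1)) ∧
      ∀ t θ, HasDerivAt (fun u => G (t, u)) (fderiv ℝ G (t, θ) (0, 1)) θ := by
    intro G hG
    refine ⟨(hG.fderiv_right (m := (⊤ : ℕ∞)) (by simp)).clm_apply contDiff_const, fun t θ => ?_⟩
    have h1 := (hG.differentiable (by simp) (t, θ)).hasFDerivAt
    have h2 : HasDerivAt (fun u : ℝ => (t, u)) ((0 : ℝ), (1 : ℝ)) θ :=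
      (hasDerivAt_const θ t).prodMk (hasDerivAt_id θ)
    exact h1.comp_hasDerivAt θ h2
  obtain ⟨hD, hd⟩ := key _ hG
  obtain ⟨hD2, hd2⟩ := key _ hD
  exact ⟨_, _, hD.continuous, hD2.continuous, hG.continuous, hd, hd2⟩

lemma E_nhds (θ : ℝ) {U : Set ℝ} (hU : U ∈ nhds θ) : E '' U ∈ nhds (E θ) := by
  obtain ⟨V, hVU, hV, hθ⟩ := mem_nhds_iff.1 hU
  have hc : IsCompact (E '' (Set.Icc (θ - Real.pi) (θ + Real.pi) \ V)) :=
    (isCompact_Icc.diff hV).image E_contMDiff.continuous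
  have ho : (E '' (Set.Icc (θ - Real.pi) (θ + Real.pi) \ V))ᶜ ∈ nhds (E θ) := by
    apply hc.isClosed.isOpen_compl.mem_nhds
    rintro ⟨η, ⟨⟨h1, h2⟩, h3⟩, h4⟩
    obtain ⟨n, hn⟩ := E_eq_iff.1 h4
    have hpi := Real.pi_pos
    have hn1 : (n : ℝ) < 1 := by nlinarith
    have hn2 : (-1 : ℝ) < n := by nlinarith
    have hn0 : n = 0 := by
      have a1 : n < 1 := by exact_mod_cast hn1
      have a2 : -1 < n := by exact_mod_cast hn2
      omega
    subst hn0
    simp at hn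
    exact h3 (hn ▸ hθ)
  filter_upwards [ho] with s hs
  obtain ⟨η, hη, rfl⟩ := E_surj_Icc (θ - Real.pi) s
  refine ⟨η, hVU ?_, rfl⟩
  by_contra h
  exact hs ⟨η, ⟨⟨hη.1, by linarith [hη.2]⟩, h⟩, rfl⟩

/-- A strongly invertible Legendrian knot meets the axis in the direction of `∂_y`. -/
lemma vertical {K : S1 → R3} (h1 : IsStronglyInvertibleKnot K) (h2 : IsLegendrianKnot K) {D : ℝ → R3}
    (hDc : Continuous D) (hD : ∀ θ, HasDerivAt (fun u => K (E u)) (D θ) θ) {θ : ℝ} (hθ : K (E θ) ∈ xAxisSet) :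
    (D θ).2.1 ≠ 0 := by
  intro hy
  have hz := h2.alpha θ
  rw [(hD θ).deriv] at hz
  have hz' : (D θ).2.2 = 0 := by
    unfold alphaForm at hz
    rw [hθ.1] at hz
    linarith
  have hne := h1.1.deriv_ne θ
  rw [(hD θ).deriv] at hne
  have hx : (D θ).1 ≠ 0 := by
    intro hx
    exact hne (by ext <;> assumption)
  -- the `x`-coordinate is locally injective
  have hxd : ∀ u, HasDerivAt (fun u => (K (E u)).1) ((D u).1) u := fun u => (hD u).fst
  have hstrict : HasStrictDerivAt (fun u => (K (E u)).1) ((D θ).1) θ :=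
    hasStrictDerivAt_of_hasDerivAt_of_continuousAt (.of_forall hxd) (hDc.fst.continuousAt)
  have hloc : ∃ U ∈ nhds θ, Set.InjOn (fun u => (K (E u)).1) U := by
    have := hstrict.hasStrictFDerivAt_equiv hx
    exact ⟨_, (this.toOpenPartialHomeomorph _).open_source.mem_nhds this.mem_toOpenPartialHomeomorph_source,
      (this.toOpenPartialHomeomorph _).injOn⟩
  obtain ⟨U, hU, hinj⟩ := hloc
  have hKc : Continuous K := h1.1.1.continuous
  have hemb : Topology.IsClosedEmbedding K := hKc.isClosedEmbedding h1.1.2.1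
  have hσ : ∀ s, ∃ s', K s' = tau (K s) := by
    intro s
    have : tau (K s) ∈ tau '' Set.range K := ⟨_, ⟨s, rfl⟩, rfl⟩
    rw [h1.2.1] at this
    exact this
  choose σ hσ using hσ
  have htauc : Continuous tau := by unfold tau; fun_prop
  have hσc : Continuous σ := by
    rw [hemb.isInducing.continuous_iff]
    have : K ∘ σ = tau ∘ K := funext hσ
    rw [this]
    exact htauc.comp hKc
  have hfix : σ (E θ) = E θ := by
    apply h1.1.2.1
    rw [hσ]
    unfold tau
    ext
    · rfl
    · simp [hθ.1]
    · simp [hθ.2]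
  have hnear : ∀ᶠ u in nhds θ, σ (E u) ∈ E '' U := by
    have hc : ContinuousAt (fun u => σ (E u)) θ := (hσc.comp E_contMDiff.continuous).continuousAt
    apply hc
    simp only [hfix]
    exact E_nhds θ hU
  have hax : ∀ᶠ u in nhds θ, u ∈ U ∧ K (E u) ∈ xAxisSet := by
    filter_upwards [hnear, hU] with u hu huU
    refine ⟨huU, ?_⟩
    obtain ⟨v, hvU, hv⟩ := hu
    have h3 : K (E v) = tau (K (E u)) := by rw [hv, hσ]
    have h4 : v = u := hinj hvU huU (by simp only [h3]; rfl)
    subst h4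
    unfold tau at h3
    have e1 := congrArg (fun q : R3 => q.2.1) h3
    have e2 := congrArg (fun q : R3 => q.2.2) h3
    simp only at e1 e2
    exact ⟨by linarith, by linarith⟩
  have hfin : (Set.range K ∩ xAxisSet).Finite := by
    apply Set.finite_of_encard_le_coe (k := 2)
    rw [h1.2.2]; norm_num
  have hinf : {u | u ∈ U ∧ K (E u) ∈ xAxisSet}.Infinite := infinite_of_mem_nhds θ hax
  refine hinf (Set.Finite.of_injOn (f := fun u => K (E u)) (t := Set.range K ∩ xAxisSet) ?_ ?_ hfin)
  · rintro u ⟨_, hu⟩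
    exact ⟨⟨_, rfl⟩, hu⟩
  · rintro u ⟨hu, _⟩ v ⟨hv, _⟩ huv
    exact hinj hu hv (congrArg Prod.fst huv)

lemma deriv_periodic {K : S1 → R3} {D : ℝ → R3} (hD : ∀ θ, HasDerivAt (fun u => K (E u)) (D θ) θ)
    {θ θ' : ℝ} (h : E θ = E θ') : D θ = D θ' := by
  obtain ⟨n, rfl⟩ := E_eq_iff.1 h
  have h1 : HasDerivAt (fun u => K (E (u + n * (2 * Real.pi)))) (D (θ' + n * (2 * Real.pi))) θ' :=
    (hD (θ' + n * (2 * Real.pi))).comp_add_const θ' (n * (2 * Real.pi))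
  have h2 : (fun u => K (E (u + n * (2 * Real.pi)))) = fun u => K (E u) := by
    funext u
    rw [E_eq_iff.2 ⟨n, rfl⟩]
  rw [h2] at h1
  exact h1.unique (hD θ')

/-- `(θ, η)` are the left and the right point of the knot on the axis. -/
def IsLR (K : S1 → R3) (θ η : ℝ) : Prop :=
  K (E θ) ∈ xAxisSet ∧ K (E η) ∈ xAxisSet ∧ (K (E θ)).1 < (K (E η)).1

lemma IsLR.left_unique {K : S1 → R3} (h1 : IsStronglyInvertibleKnot K) {θ η θ' η' : ℝ}
    (h : IsLR K θ η) (h' : IsLR K θ' η') : E θ = E θ' := by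
  obtain ⟨p, q, hpq, hS⟩ := Set.encard_eq_two.1 h1.2.2
  have mem : ∀ u, K (E u) ∈ xAxisSet → K (E u) = p ∨ K (E u) = q := by
    intro u hu
    have : K (E u) ∈ Set.range K ∩ xAxisSet := ⟨⟨_, rfl⟩, hu⟩
    rw [hS] at this
    exact this
  obtain ⟨a1, a2, a3⟩ := h
  obtain ⟨b1, b2, b3⟩ := h'
  apply h1.1.2.1
  rcases mem _ a1 with e1 | e1 <;> rcases mem _ a2 with e2 | e2 <;> rcases mem _ b1 with e3 | e3 <;>
    rcases mem _ b2 with e4 | e4 <;> rw [e1, e2] at a3 <;> rw [e3, e4] at b3 <;> rw [e1, e3] <;>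
    exfalso <;> linarith

lemma exists_LR {K : S1 → R3} (h1 : IsStronglyInvertibleKnot K) :
    ∃ θ η, IsLR K θ η ∧ θ ∈ Set.Icc 0 (2 * Real.pi) ∧ η ∈ Set.Icc (θ - Real.pi) (θ + Real.pi) := by
  obtain ⟨p, q, hpq, hS⟩ := Set.encard_eq_two.1 h1.2.2
  have main : ∀ p q : R3, p.1 < q.1 → p ∈ Set.range K ∩ xAxisSet → q ∈ Set.range K ∩ xAxisSet →
      ∃ θ η, IsLR K θ η ∧ θ ∈ Set.Icc 0 (2 * Real.pi) ∧ η ∈ Set.Icc (θ - Real.pi) (θ + Real.pi) := by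
    rintro _ _ hlt ⟨⟨s, rfl⟩, hs⟩ ⟨⟨s', rfl⟩, hs'⟩
    obtain ⟨θ, hθ, rfl⟩ := E_surj_Icc 0 s
    obtain ⟨η, hη, rfl⟩ := E_surj_Icc (θ - Real.pi) s'
    exact ⟨θ, η, ⟨hs, hs', hlt⟩, ⟨hθ.1, by linarith [hθ.2]⟩, ⟨hη.1, by linarith [hη.2]⟩⟩
  have hp : p ∈ Set.range K ∩ xAxisSet := by rw [hS]; simp
  have hq : q ∈ Set.range K ∩ xAxisSet := by rw [hS]; simp
  rcases lt_trichotomy p.1 q.1 with h | h | h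
  · exact main p q h hp hq
  · exfalso
    apply hpq
    ext
    · exact h
    · rw [hp.2.1, hq.2.1]
    · rw [hp.2.2, hq.2.2]
  · exact main q p h hq hp

lemma sign_inv (K : ℝ → S1 → R3) (D : ℝ × ℝ → R3) (hc : Continuous fun q : ℝ × ℝ => K q.1 (E q.2))
    (hDc : Continuous D) (hD : ∀ t θ, HasDerivAt (fun u => K t (E u)) (D (t, θ)) θ)
    (hK : ∀ t ∈ Set.Icc (0 : ℝ) 1, IsStronglyInvertibleKnot (K t) ∧ IsLegendrianKnot (K t))
    (h0 : ∀ θ η, IsLR (K 0) θ η → 0 < (D (0, θ)).2.1)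
    (h1 : ∀ θ η, IsLR (K 1) θ η → (D (1, θ)).2.1 < 0) : False := by
  have hpi := Real.pi_pos
  -- the compact sets of configurations
  let C : ℝ → Set (ℝ × ℝ × ℝ × ℝ) := fun e =>
    (Set.Icc (0 : ℝ) 1 ×ˢ Set.Icc 0 (2 * Real.pi) ×ˢ Set.Icc (-Real.pi) (3 * Real.pi) ×ˢ
      Set.Icc (-Real.pi) (3 * Real.pi)) ∩
    {q | q.2.2.1 ≤ q.2.1 + Real.pi ∧ q.2.1 - Real.pi ≤ q.2.2.1 ∧
      min q.2.1 q.2.2.1 ≤ q.2.2.2 ∧ q.2.2.2 ≤ max q.2.1 q.2.2.1 ∧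
      (K q.1 (E q.2.1)).2.1 = 0 ∧ (K q.1 (E q.2.1)).2.2 = 0 ∧
      (K q.1 (E q.2.2.1)).2.1 = 0 ∧ (K q.1 (E q.2.2.1)).2.2 = 0 ∧
      (K q.1 (E q.2.1)).1 ≤ (K q.1 (E q.2.2.1)).1 ∧
      (D (q.1, q.2.2.2)).2.1 = 0 ∧ 0 ≤ e * (D (q.1, q.2.1)).2.1}
  have hCc : ∀ e, IsCompact (C e) := by
    intro e
    apply IsCompact.inter_right
    · exact isCompact_Icc.prod (isCompact_Icc.prod (isCompact_Icc.prod isCompact_Icc))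
    · have k1 : Continuous fun q : ℝ × ℝ × ℝ × ℝ => K q.1 (E q.2.1) :=
        hc.comp (f := fun q : ℝ × ℝ × ℝ × ℝ => (q.1, q.2.1)) (by fun_prop)
      have k2 : Continuous fun q : ℝ × ℝ × ℝ × ℝ => K q.1 (E q.2.2.1) :=
        hc.comp (f := fun q : ℝ × ℝ × ℝ × ℝ => (q.1, q.2.2.1)) (by fun_prop)
      have k3 : Continuous fun q : ℝ × ℝ × ℝ × ℝ => D (q.1, q.2.2.2) := by fun_prop
      have k4 : Continuous fun q : ℝ × ℝ × ℝ × ℝ => D (q.1, q.2.1) := by fun_prop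
      refine (isClosed_le (by fun_prop) (by fun_prop)).and ?_
      refine (isClosed_le (by fun_prop) (by fun_prop)).and ?_
      refine (isClosed_le (by fun_prop) (by fun_prop)).and ?_
      refine (isClosed_le (by fun_prop) (by fun_prop)).and ?_
      refine (isClosed_eq k1.snd.fst (by fun_prop)).and ?_
      refine (isClosed_eq k1.snd.snd (by fun_prop)).and ?_
      refine (isClosed_eq k2.snd.fst (by fun_prop)).and ?_
      refine (isClosed_eq k2.snd.snd (by fun_prop)).and ?_
      refine (isClosed_le k1.fst k2.fst).and ?_
      refine (isClosed_eq k3.snd.fst (by fun_prop)).and ?_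
      exact isClosed_le (by fun_prop) (continuous_const.mul k4.snd.fst)
  have hAc : ∀ e, IsClosed (Prod.fst '' C e) := fun e => ((hCc e).image continuous_fst).isClosed
  -- elements of the projections
  have hA : ∀ e, ∀ t ∈ Prod.fst '' C e, ∃ θ η, t ∈ Set.Icc (0 : ℝ) 1 ∧ IsLR (K t) θ η ∧
      0 ≤ e * (D (t, θ)).2.1 := by
    rintro e _ ⟨⟨t, θ, η, ζ⟩, ⟨⟨ht, -⟩, c1, c2, c3, c4, c5, c6, c7, c8, c9, c10, c11⟩, rfl⟩
    simp only at ht c1 c2 c3 c4 c5 c6 c7 c8 c9 c10 c11 ⊢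
    refine ⟨θ, η, ht, ⟨⟨c5, c6⟩, ⟨c7, c8⟩, lt_of_le_of_ne c9 ?_⟩, c11⟩
    intro hx
    have hEq : E θ = E η := by
      apply (hK t ht).1.1.2.1
      ext
      · exact hx
      · rw [c5, c7]
      · rw [c6, c8]
    obtain ⟨n, hn⟩ := E_eq_iff.1 hEq
    have hn1 : (n : ℝ) < 1 := by nlinarith
    have hn2 : (-1 : ℝ) < n := by nlinarith
    have hn0 : n = 0 := by
      have a1 : n < 1 := by exact_mod_cast hn1
      have a2 : -1 < n := by exact_mod_cast hn2
      omega
    subst hn0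
    simp at hn
    subst hn
    simp at c3 c4
    have : ζ = θ := le_antisymm c4 c3
    subst this
    exact vertical (hK t ht).1 (hK t ht).2 (D := fun u => D (t, u)) (by fun_prop) (hD t) ⟨c5, c6⟩ c10
  have hcov : Set.Icc (0 : ℝ) 1 ⊆ Prod.fst '' C 1 ∪ Prod.fst '' C (-1) := by
    intro t ht
    obtain ⟨θ, η, hLR, hθ, hη⟩ := exists_LR (hK t ht).1
    have hne : θ ≠ η := by
      rintro rfl
      exact lt_irrefl _ hLR.2.2
    have hyd : ∀ u, HasDerivAt (fun u => (K t (E u)).2.1) ((D (t, u)).2.1) u := fun u => (hD t u).snd.fst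
    have hrolle : ∃ ζ, min θ η ≤ ζ ∧ ζ ≤ max θ η ∧ (D (t, ζ)).2.1 = 0 := by
      rcases lt_or_gt_of_ne hne with h | h
      · obtain ⟨ζ, hζ, hd⟩ := exists_hasDerivAt_eq_zero h (f := fun u => (K t (E u)).2.1)
          (fun u _ => (hyd u).continuousAt.continuousWithinAt) (by rw [hLR.1.1, hLR.2.1.1]) (fun u _ => hyd u)
        exact ⟨ζ, (min_le_left _ _).trans hζ.1.le, hζ.2.le.trans (le_max_right _ _), hd⟩
      · obtain ⟨ζ, hζ, hd⟩ := exists_hasDerivAt_eq_zero h (f := fun u => (K t (E u)).2.1)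
          (fun u _ => (hyd u).continuousAt.continuousWithinAt) (by rw [hLR.1.1, hLR.2.1.1]) (fun u _ => hyd u)
        exact ⟨ζ, (min_le_right _ _).trans hζ.1.le, hζ.2.le.trans (le_max_left _ _), hd⟩
    obtain ⟨ζ, z1, z2, z3⟩ := hrolle
    have hζ : ζ ∈ Set.Icc (-Real.pi) (3 * Real.pi) := by
      constructor
      · refine le_trans (le_min ?_ ?_) z1 <;> linarith [hθ.1, hη.1]
      · refine z2.trans (max_le ?_ ?_) <;> linarith [hθ.2, hη.2]
    have hη' : η ∈ Set.Icc (-Real.pi) (3 * Real.pi) := ⟨by linarith [hθ.1, hη.1], by linarith [hθ.2, hη.2]⟩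
    have hmem : ∀ e : ℝ, 0 ≤ e * (D (t, θ)).2.1 → t ∈ Prod.fst '' C e := by
      intro e he
      exact ⟨(t, θ, η, ζ), ⟨⟨ht, hθ, hη', hζ⟩, hη.2, hη.1, z1, z2, hLR.1.1, hLR.1.2, hLR.2.1.1, hLR.2.1.2,
        hLR.2.2.le, z3, he⟩, rfl⟩
    rcases le_total 0 ((D (t, θ)).2.1) with h | h
    · left; exact hmem 1 (by linarith)
    · right; exact hmem (-1) (by linarith)
  have hI0 : (0 : ℝ) ∈ Set.Icc (0 : ℝ) 1 := by simp
  have hI1 : (1 : ℝ) ∈ Set.Icc (0 : ℝ) 1 := by simp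
  have n0 : (Set.Icc (0 : ℝ) 1 ∩ Prod.fst '' C 1).Nonempty := by
    refine ⟨0, hI0, ?_⟩
    rcases hcov hI0 with h | h
    · exact h
    · obtain ⟨θ, η, -, hLR, hs⟩ := hA _ _ h
      have := h0 θ η hLR
      linarith
  have n1 : (Set.Icc (0 : ℝ) 1 ∩ Prod.fst '' C (-1)).Nonempty := by
    refine ⟨1, hI1, ?_⟩
    rcases hcov hI1 with h | h
    · obtain ⟨θ, η, -, hLR, hs⟩ := hA _ _ h
      have := h1 θ η hLR
      linarith
    · exact h
  obtain ⟨t, ht, m1, m2⟩ := isPreconnected_closed_iff.1 isPreconnected_Icc _ _ (hAc 1) (hAc (-1)) hcov n0 n1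
  obtain ⟨θ, η, -, hLR, hs⟩ := hA _ _ m1
  obtain ⟨θ', η', -, hLR', hs'⟩ := hA _ _ m2
  have hE := hLR.left_unique (hK t ht).1 hLR'
  have hDD : D (t, θ) = D (t, θ') := deriv_periodic (D := fun u => D (t, u)) (hD t) hE
  rw [← hDD] at hs'
  exact vertical (hK t ht).1 (hK t ht).2 (D := fun u => D (t, u)) (by fun_prop) (hD t) hLR.1
    (by linarith)

/-! Rotation numbers. -/

lemma rot_int {w w2 : ℝ → ℂ} (hw : ∀ θ, HasDerivAt w (w2 θ) θ) (hc : Continuous w2)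
    (hne : ∀ θ, w θ ≠ 0) (hper : w (2 * Real.pi) = w 0) :
    ∃ n : ℤ, ∫ θ in (0 : ℝ)..(2 * Real.pi), w2 θ / w θ = n * (2 * Real.pi * Complex.I) := by
  have hwc : Continuous w := continuous_iff_continuousAt.2 fun θ => (hw θ).continuousAt
  have hq : Continuous fun θ => w2 θ / w θ := hc.div hwc hne
  let W : ℝ → ℂ := fun θ => ∫ u in (0 : ℝ)..θ, w2 u / w u
  have hW : ∀ θ, HasDerivAt W (w2 θ / w θ) θ := fun θ =>
    intervalIntegral.integral_hasDerivAt_right (hq.intervalIntegrable _ _)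
      (hq.stronglyMeasurableAtFilter _ _) hq.continuousAt
  have hconst : ∀ θ, HasDerivAt (fun θ => w θ * Complex.exp (-W θ)) 0 θ := by
    intro θ
    have := (hw θ).mul (hW θ).neg.cexp
    convert! this using 1
    have := hne θ
    field_simp
    ring
  have h1 := is_const_of_deriv_eq_zero (fun θ => (hconst θ).differentiableAt) (fun θ => (hconst θ).deriv)
    (2 * Real.pi) 0
  have hW0 : W 0 = 0 := by simp [W]
  simp only [hper, hW0] at h1
  have h2 : Complex.exp (-W (2 * Real.pi)) = Complex.exp (-0) := mul_left_cancel₀ (hne 0) h1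
  rw [neg_zero, Complex.exp_zero, Complex.exp_eq_one_iff] at h2
  obtain ⟨n, hn⟩ := h2
  refine ⟨-n, ?_⟩
  change W (2 * Real.pi) = _
  push_cast
  linear_combination -hn

lemma rot_const {w w2 : ℝ × ℝ → ℂ} (hw : ∀ t θ, HasDerivAt (fun u => w (t, u)) (w2 (t, θ)) θ)
    (hwc : Continuous w) (hc : Continuous w2)
    (hne : ∀ t ∈ Set.Icc (0 : ℝ) 1, ∀ θ, w (t, θ) ≠ 0) (hper : ∀ t, w (t, 2 * Real.pi) = w (t, 0)) :
    ∫ θ in (0 : ℝ)..(2 * Real.pi), w2 (0, θ) / w (0, θ) =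
      ∫ θ in (0 : ℝ)..(2 * Real.pi), w2 (1, θ) / w (1, θ) := by
  let pr : ℝ → ℝ := fun t => (Set.projIcc (0 : ℝ) 1 zero_le_one t : ℝ)
  have hpr : Continuous pr := continuous_subtype_val.comp continuous_projIcc
  have hprm : ∀ t, pr t ∈ Set.Icc (0 : ℝ) 1 := fun t => (Set.projIcc (0 : ℝ) 1 zero_le_one t).2
  have hpr0 : pr 0 = 0 := by simp [pr]
  have hpr1 : pr 1 = 1 := by simp [pr]
  let I : ℝ → ℂ := fun t => ∫ θ in (0 : ℝ)..(2 * Real.pi), w2 (pr t, θ) / w (pr t, θ)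
  have hI : Continuous I := by
    apply intervalIntegral.continuous_parametric_intervalIntegral_of_continuous'
    apply Continuous.div
    · fun_prop
    · fun_prop
    · intro q
      exact hne _ (hprm _) _
  have hIntg : ∀ t, ∃ n : ℤ, I t = n * (2 * Real.pi * Complex.I) := by
    intro t
    exact rot_int (w := fun u => w (pr t, u)) (w2 := fun u => w2 (pr t, u)) (hw (pr t)) (by fun_prop)
      (hne _ (hprm t)) (hper _)
  choose N hN using hIntg
  have hNc : Continuous fun t => (N t : ℝ) := by
    have : (fun t => (N t : ℝ)) = fun t => (I t).im / (2 * Real.pi) := by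
      funext t
      rw [hN]
      simp
    rw [this]
    fun_prop
  have hNc' : Continuous N := Int.isClosedEmbedding_coe_real.isInducing.continuous_iff.2 hNc
  have hN01 : N 0 = N 1 := PreconnectedSpace.constant inferInstance hNc'
  have : I 0 = I 1 := by rw [hN, hN, hN01]
  simpa only [I, hpr0, hpr1] using this

/-- A logarithm of a loop winding once around the origin. -/
def FLog (k : ℂ) (w : ℝ → ℂ) (θ : ℝ) : ℂ :=
  Complex.log (k * w θ * Complex.exp (θ * Complex.I)) - θ * Complex.I

lemma FLog_hasDerivAt {k : ℂ} {w : ℝ → ℂ} {w' : ℂ} {θ : ℝ} (hw : HasDerivAt w w' θ) (hk : k ≠ 0)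
    (hne : w θ ≠ 0)
    (hs : k * w θ * Complex.exp (θ * Complex.I) ∈ Complex.slitPlane) :
    HasDerivAt (FLog k w) (w' / w θ) θ := by
  have h0 : HasDerivAt (fun u : ℝ => (u : ℂ) * Complex.I) Complex.I θ := by
    simpa using (Complex.ofRealCLM.hasDerivAt (x := θ)).mul_const Complex.I
  have h1 := (((hw.const_mul k).mul h0.cexp).clog_real hs).sub h0
  convert! h1 using 1
  have := Complex.exp_ne_zero (θ * Complex.I)
  simp only [Pi.mul_apply]
  field_simp
  ring

/-- velocity of the projection of the first knot -/
def w1 (θ : ℝ) : ℂ := ⟨-Real.sin θ, Real.cos θ * (9 - 12 * Real.cos θ ^ 2)⟩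

/-- velocity of the projection of the second knot -/
def wk (θ : ℝ) : ℂ := ⟨-Real.sin θ * (9 - 12 * Real.sin θ ^ 2), Real.cos θ⟩

lemma exp_I_eq (θ : ℝ) : Complex.exp (θ * Complex.I) = ⟨Real.cos θ, Real.sin θ⟩ := by
  apply Complex.ext
  · simp [Complex.exp_ofReal_mul_I_re]
  · simp [Complex.exp_ofReal_mul_I_im]

lemma w1_slit (θ : ℝ) : Complex.I * w1 θ * Complex.exp (θ * Complex.I) ∈ Complex.slitPlane := by
  rw [exp_I_eq, Complex.mem_slitPlane_iff]
  have h := Real.sin_sq_add_cos_sq θ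
  simp only [w1, Complex.mul_re, Complex.mul_im, Complex.I_re, Complex.I_im]
  set c := Real.cos θ
  set s := Real.sin θ
  by_contra! hcon
  obtain ⟨h1, h2⟩ := hcon
  have h3 : s * (c * (10 - 12 * c ^ 2)) = 0 := by linear_combination -h2
  rcases mul_eq_zero.1 h3 with h4 | h4
  · rw [h4] at h1 h
    have hc : c ^ 2 = 1 := by linarith
    nlinarith
  · rcases mul_eq_zero.1 h4 with h5 | h5
    · rw [h5] at h1 h
      nlinarith
    · have hc : c ^ 2 = 10 / 12 := by linarith
      have hs : s ^ 2 = 2 / 12 := by linarith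
      rw [hc] at h1
      nlinarith

lemma wk_slit (θ : ℝ) : -Complex.I * wk θ * Complex.exp (θ * Complex.I) ∈ Complex.slitPlane := by
  rw [exp_I_eq, Complex.mem_slitPlane_iff]
  have h := Real.sin_sq_add_cos_sq θ
  simp only [wk, Complex.mul_re, Complex.mul_im, Complex.I_re, Complex.I_im, Complex.neg_re, Complex.neg_im]
  set c := Real.cos θ
  set s := Real.sin θ
  by_contra! hcon
  obtain ⟨h1, h2⟩ := hcon
  have h3 : c * (s * (10 - 12 * s ^ 2)) = 0 := by linear_combination h2
  rcases mul_eq_zero.1 h3 with h4 | h4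
  · rw [h4] at h1 h
    have hc : s ^ 2 = 1 := by linarith
    nlinarith
  · rcases mul_eq_zero.1 h4 with h5 | h5
    · rw [h5] at h1 h
      nlinarith
    · have hc : s ^ 2 = 10 / 12 := by linarith
      have hs : c ^ 2 = 2 / 12 := by linarith
      rw [hc] at h1
      nlinarith

lemma w1_ne (θ : ℝ) : w1 θ ≠ 0 := by
  intro h
  have := Complex.slitPlane_ne_zero (w1_slit θ)
  simp [h] at this

lemma wk_ne (θ : ℝ) : wk θ ≠ 0 := by
  intro h
  have := Complex.slitPlane_ne_zero (wk_slit θ)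
  simp [h] at this

lemma wk_hasDerivAt (θ : ℝ) : ∃ d, HasDerivAt wk d θ := by
  have h1 : DifferentiableAt ℝ (fun θ : ℝ => ((-Real.sin θ * (9 - 12 * Real.sin θ ^ 2) : ℝ) : ℂ)
      + (Real.cos θ : ℝ) * Complex.I) θ := by fun_prop
  have h2 : (fun θ : ℝ => ((-Real.sin θ * (9 - 12 * Real.sin θ ^ 2) : ℝ) : ℂ)
      + (Real.cos θ : ℝ) * Complex.I) = wk := by
    funext u
    exact (Complex.mk_eq_add_mul_I _ _).symm
  rw [h2] at h1
  exact ⟨_, h1.hasDerivAt⟩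

lemma exists_lift {a b a' b' : ℝ → ℝ} (ha : ∀ θ, HasDerivAt a (a' θ) θ) (hb : ∀ θ, HasDerivAt b (b' θ) θ)
    (hac : Continuous a') (hbc : Continuous b') (h : ∀ θ, a θ ^ 2 + b θ ^ 2 = 1) :
    ∃ ψ : ℝ → ℝ, (∀ θ, HasDerivAt ψ (a θ * b' θ - b θ * a' θ) θ) ∧
      (∀ θ, a θ = Real.cos (ψ θ)) ∧ ∀ θ, b θ = Real.sin (ψ θ) := by
  have hca : Continuous a := continuous_iff_continuousAt.2 fun θ => (ha θ).continuousAt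
  have hcb : Continuous b := continuous_iff_continuousAt.2 fun θ => (hb θ).continuousAt
  have hq : Continuous fun θ => a θ * b' θ - b θ * a' θ := by fun_prop
  obtain ⟨s, hs0, hs1⟩ := exists_S1 (h 0)
  obtain ⟨p0, rfl⟩ := E_surj s
  rw [E_zero] at hs0
  rw [E_one] at hs1
  let ψ : ℝ → ℝ := fun θ => p0 + ∫ u in (0 : ℝ)..θ, (a u * b' u - b u * a' u)
  have hψ : ∀ θ, HasDerivAt ψ (a θ * b' θ - b θ * a' θ) θ := fun θ =>
    (intervalIntegral.integral_hasDerivAt_right (hq.intervalIntegrable _ _)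
      (hq.stronglyMeasurableAtFilter _ _) hq.continuousAt).const_add p0
  have hψ0 : ψ 0 = p0 := by simp [ψ]
  have horth : ∀ θ, a θ * a' θ + b θ * b' θ = 0 := by
    intro θ
    have h1 := ((ha θ).pow 2).add ((hb θ).pow 2)
    have h2 : HasDerivAt (a ^ 2 + b ^ 2) 0 θ := by
      have : a ^ 2 + b ^ 2 = fun _ => (1 : ℝ) := by
        funext u
        simpa using h u
      rw [this]
      exact hasDerivAt_const _ _
    have h3 := h1.unique h2
    simp at h3
    linarith
  have hC : ∀ θ, a θ * Real.cos (ψ θ) + b θ * Real.sin (ψ θ) = 1 := by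
    have hd : ∀ θ, HasDerivAt (fun θ => a θ * Real.cos (ψ θ) + b θ * Real.sin (ψ θ)) 0 θ := by
      intro θ
      have h1 := ((ha θ).mul (hψ θ).cos).add ((hb θ).mul (hψ θ).sin)
      convert! h1 using 1
      have h2 := horth θ
      have h3 := h θ
      linear_combination (-b θ * Real.sin (ψ θ) - a θ * Real.cos (ψ θ)) * h2 + (a' θ * Real.cos (ψ θ) + b' θ * Real.sin (ψ θ)) * h3
    intro θ
    have h1 := is_const_of_deriv_eq_zero (fun θ => (hd θ).differentiableAt) (fun θ => (hd θ).deriv) θ 0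
    simp only [hψ0, hs0, hs1] at h1
    rw [h1]
    linear_combination h 0
  have hS : ∀ θ, b θ * Real.cos (ψ θ) - a θ * Real.sin (ψ θ) = 0 := by
    intro θ
    have h1 := hC θ
    have h2 := h θ
    have h3 := Real.sin_sq_add_cos_sq (ψ θ)
    have : (b θ * Real.cos (ψ θ) - a θ * Real.sin (ψ θ)) ^ 2 = 0 := by
      linear_combination h2 * (Real.sin (ψ θ) ^ 2 + Real.cos (ψ θ) ^ 2) + h3 - h1 * (a θ * Real.cos (ψ θ) + b θ * Real.sin (ψ θ) + 1)
    exact pow_eq_zero_iff (by norm_num) |>.1 this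
  refine ⟨ψ, hψ, fun θ => ?_, fun θ => ?_⟩
  · have h3 := Real.sin_sq_add_cos_sq (ψ θ)
    linear_combination Real.cos (ψ θ) * hC θ - Real.sin (ψ θ) * hS θ - a θ * h3
  · have h3 := Real.sin_sq_add_cos_sq (ψ θ)
    linear_combination Real.sin (ψ θ) * hC θ + Real.cos (ψ θ) * hS θ - b θ * h3

lemma hda_x {f : ℝ → R3} {v : R3} {θ : ℝ} (h : HasDerivAt f v θ) :
    HasDerivAt (fun u => (f u).1) v.1 θ := by
  simpa using (h.hasFDerivAt.fst).hasDerivAt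

lemma hda_y {f : ℝ → R3} {v : R3} {θ : ℝ} (h : HasDerivAt f v θ) :
    HasDerivAt (fun u => (f u).2.1) v.2.1 θ := by
  simpa using (h.hasFDerivAt.snd.fst).hasDerivAt

lemma hda_z {f : ℝ → R3} {v : R3} {θ : ℝ} (h : HasDerivAt f v θ) :
    HasDerivAt (fun u => (f u).2.2) v.2.2 θ := by
  simpa using (h.hasFDerivAt.snd.snd).hasDerivAt

lemma aux_cont {x y z dx dy dz : ℝ → ℝ} (hx : Continuous x) (hy : Continuous y)
    (hz : Continuous z) (hdx : Continuous dx) (hdy : Continuous dy) (hdz : Continuous dz) :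
    Continuous fun θ => (8 * y θ * dy θ) * x θ + (1 + 4 * y θ ^ 2) * dx θ
      - 16 / 3 * (dy θ * z θ + y θ * dz θ) := by
  fun_prop

lemma aux_diff {x y z dx dy dz : ℝ → ℝ} {θ : ℝ} (hx : DifferentiableAt ℝ x θ)
    (hy : DifferentiableAt ℝ y θ) (hz : DifferentiableAt ℝ z θ) (hdx : DifferentiableAt ℝ dx θ)
    (hdy : DifferentiableAt ℝ dy θ) (hdz : DifferentiableAt ℝ dz θ) :
    DifferentiableAt ℝ (fun θ => (8 * y θ * dy θ) * x θ + (1 + 4 * y θ ^ 2) * dx θ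
      - 16 / 3 * (dy θ * z θ + y θ * dz θ)) θ := by
  fun_prop

lemma part_e : ¬ ∃ H : ℝ × S1 → R3, IsSmoothFamily H ∧
          (∀ t ∈ Set.Icc (0 : ℝ) 1,
            IsStronglyInvertibleKnot (fun s => H (t, s)) ∧
            IsLegendrianKnot fun s => H (t, s)) ∧
          (∀ s, H (0, s) = HH 1 0 0 s) ∧
          Set.range (fun s => H (1, s)) = Set.range (HH 0 1 (Real.pi / 2)) := by
  rintro ⟨H, hH, hK, h0, h1⟩
  obtain ⟨D, D2, hDc, hD2c, hGc, hD, hD2⟩ := family_derivs hH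
  have hE2 : E (2 * Real.pi) = E 0 := by simpa using E_add_two_pi 0
  -- velocity of the projection
  let w : ℝ × ℝ → ℂ := fun q => ⟨(D q).1, (D q).2.1⟩
  let w2 : ℝ × ℝ → ℂ := fun q => ⟨(D2 q).1, (D2 q).2.1⟩
  have hmk : ∀ f : ℝ × ℝ → R3, Continuous f → Continuous fun q => (⟨(f q).1, (f q).2.1⟩ : ℂ) := by
    intro f hf
    have : (fun q => (⟨(f q).1, (f q).2.1⟩ : ℂ)) = fun q => ((f q).1 : ℂ) + ((f q).2.1 : ℂ) * Complex.I := by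
      funext q; exact Complex.mk_eq_add_mul_I _ _
    rw [this]; fun_prop
  have hwc : Continuous w := hmk D hDc
  have hw2c : Continuous w2 := hmk D2 hD2c
  have hw : ∀ t θ, HasDerivAt (fun u => w (t, u)) (w2 (t, θ)) θ := by
    intro t θ
    have e1 : (fun u => w (t, u)) = fun u => ((D (t, u)).1 : ℂ) + ((D (t, u)).2.1 : ℂ) * Complex.I := by
      funext q; exact Complex.mk_eq_add_mul_I _ _
    have e2 : w2 (t, θ) = ((D2 (t, θ)).1 : ℂ) + ((D2 (t, θ)).2.1 : ℂ) * Complex.I :=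
      Complex.mk_eq_add_mul_I _ _
    rw [e1, e2]
    exact (hda_x (hD2 t θ)).ofReal_comp.add ((hda_y (hD2 t θ)).ofReal_comp.mul_const _)
  have hwne : ∀ t ∈ Set.Icc (0 : ℝ) 1, ∀ θ, w (t, θ) ≠ 0 := by
    intro t ht θ hz
    have hx : (D (t, θ)).1 = 0 := congrArg Complex.re hz
    have hy : (D (t, θ)).2.1 = 0 := congrArg Complex.im hz
    have ha := (hK t ht).2.alpha θ
    have hne := (hK t ht).1.1.deriv_ne θ
    rw [(hD t θ).deriv] at ha hne
    unfold alphaForm at ha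
    rw [hx] at ha
    exact hne (by ext; exacts [hx, hy, by simpa using ha])
  have hper : ∀ t, w (t, 2 * Real.pi) = w (t, 0) := by
    intro t
    have : D (t, 2 * Real.pi) = D (t, 0) :=
      deriv_periodic (K := fun s => H (t, s)) (D := fun u => D (t, u)) (hD t) hE2
    simp only [w, this]
  have hrot := rot_const hw hwc hw2c hwne hper
  have hI0 : (0 : ℝ) ∈ Set.Icc (0 : ℝ) 1 := by simp
  have hI1 : (1 : ℝ) ∈ Set.Icc (0 : ℝ) 1 := by simp
  have hIntg : ∀ t ∈ Set.Icc (0 : ℝ) 1, IntervalIntegrable (fun θ => w2 (t, θ) / w (t, θ))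
      MeasureTheory.volume 0 (2 * Real.pi) := by
    intro t ht
    apply Continuous.intervalIntegrable
    apply Continuous.div
    · fun_prop
    · fun_prop
    · exact hwne t ht
  -- time 0
  have hD0 : ∀ θ, D (0, θ) = (-Real.sin θ, Real.cos θ * (9 - 12 * Real.cos θ ^ 2), (D (0, θ)).2.2) := by
    intro θ
    have hd := hD 0 θ
    have e : (fun u => H (0, E u)) = fun u => (Real.cos u, Real.sin u * (1 - 4 * Real.cos u ^ 2),
      Real.sin u * Real.cos u * (1 - Real.cos u ^ 2)) := by
      funext u
      rw [h0, K1_E]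
    rw [e] at hd
    have hc := Real.hasDerivAt_cos θ
    have hs := Real.hasDerivAt_sin θ
    have hy := hs.mul (((hc.pow 2).const_mul 4).const_sub 1)
    have e1 := (hda_x hd).unique hc
    have e2 := (hda_y hd).unique hy
    ext
    · exact e1
    · rw [e2]
      have := Real.sin_sq_add_cos_sq θ
      simp
      linear_combination (8 * Real.cos θ) * this
    · rfl
  have hw0 : ∀ θ, w (0, θ) = w1 θ := by
    intro θ
    simp only [w, w1]
    rw [hD0]
  have hrot0 : ∫ θ in (0 : ℝ)..(2 * Real.pi), w2 (0, θ) / w (0, θ) = -(2 * Real.pi * Complex.I) := by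
    have hd : ∀ θ ∈ Set.uIcc 0 (2 * Real.pi), HasDerivAt (FLog Complex.I (fun u => w (0, u))) (w2 (0, θ) / w (0, θ)) θ := by
      intro θ _
      refine FLog_hasDerivAt (hw 0 θ) Complex.I_ne_zero (hwne 0 hI0 θ) ?_
      rw [hw0]
      exact w1_slit θ
    rw [intervalIntegral.integral_eq_sub_of_hasDerivAt hd (hIntg 0 hI0)]
    unfold FLog
    beta_reduce
    rw [hper]
    simp
  -- time 1
  let a : ℝ → ℝ := fun θ => (1 + 4 * (H (1, E θ)).2.1 ^ 2) * (H (1, E θ)).1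
    - 16 / 3 * (H (1, E θ)).2.1 * (H (1, E θ)).2.2
  let b : ℝ → ℝ := fun θ => (H (1, E θ)).2.1
  have hab : ∀ θ, a θ ^ 2 + b θ ^ 2 = 1 ∧ H (1, E θ) = FF 0 1 (a θ) (b θ) := by
    intro θ
    have hm : H (1, E θ) ∈ Set.range (HH 0 1 (Real.pi / 2)) := by
      rw [← h1]; exact ⟨E θ, rfl⟩
    rw [HH_range] at hm
    obtain ⟨a0, b0, hs, he⟩ := hm
    have ha : a θ = a0 := by
      simp only [a]
      rw [he]
      simp only [FF]
      ring
    have hb : b θ = b0 := by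
      simp only [b]
      rw [he]
      simp only [FF]
      ring
    rw [ha, hb]
    exact ⟨hs, he⟩
  have hX := fun θ => hda_x (hD 1 θ)
  have hY := fun θ => hda_y (hD 1 θ)
  have hZ := fun θ => hda_z (hD 1 θ)
  have hX2 := fun θ => hda_x (hD2 1 θ)
  have hY2 := fun θ => hda_y (hD2 1 θ)
  have hZ2 := fun θ => hda_z (hD2 1 θ)
  let a' : ℝ → ℝ := fun θ => (8 * (H (1, E θ)).2.1 * (D (1, θ)).2.1) * (H (1, E θ)).1
    + (1 + 4 * (H (1, E θ)).2.1 ^ 2) * (D (1, θ)).1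
    - 16 / 3 * ((D (1, θ)).2.1 * (H (1, E θ)).2.2 + (H (1, E θ)).2.1 * (D (1, θ)).2.2)
  let b' : ℝ → ℝ := fun θ => (D (1, θ)).2.1
  have ha : ∀ θ, HasDerivAt a (a' θ) θ := by
    intro θ
    have := ((((hY θ).pow 2).const_mul 4).const_add 1 |>.mul (hX θ)).sub (((hY θ).const_mul (16 / 3)).mul (hZ θ))
    convert! this using 1
    simp only [a', Pi.pow_apply]
    push_cast
    ring
  have hb : ∀ θ, HasDerivAt b (b' θ) θ := hY
  have hG1 : Continuous fun θ => H (1, E θ) := hGc.comp (f := fun θ : ℝ => ((1 : ℝ), θ)) (by fun_prop)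
  have hD1 : Continuous fun θ => D (1, θ) := hDc.comp (f := fun θ : ℝ => ((1 : ℝ), θ)) (by fun_prop)
  have hac : Continuous a' := by
    exact aux_cont hG1.fst hG1.snd.fst hG1.snd.snd hD1.fst hD1.snd.fst hD1.snd.snd
  have hbc : Continuous b' := by
    exact hD1.snd.fst
  obtain ⟨ψ, hψ, hψa, hψb⟩ := exists_lift ha hb hac hbc fun θ => (hab θ).1
  let q : ℝ → ℝ := fun θ => a θ * b' θ - b θ * a' θ
  have hqd : ∀ θ, ∃ d, HasDerivAt q d θ := by
    intro θ
    have d1 : DifferentiableAt ℝ a θ := (ha θ).differentiableAt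
    have d2 : DifferentiableAt ℝ b θ := (hb θ).differentiableAt
    have d3 : DifferentiableAt ℝ b' θ := (hY2 θ).differentiableAt
    have d4 : DifferentiableAt ℝ a' θ := by
      have x1 := (hX θ).differentiableAt
      have x2 := (hY θ).differentiableAt
      have x3 := (hZ θ).differentiableAt
      have y1 := (hX2 θ).differentiableAt
      have y2 := (hY2 θ).differentiableAt
      have y3 := (hZ2 θ).differentiableAt
      exact aux_diff x1 x2 x3 y1 y2 y3
    have : DifferentiableAt ℝ q θ := (d1.mul d3).sub (d2.mul d4)
    exact ⟨_, this.hasDerivAt⟩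
  have hw1 : ∀ θ, w (1, θ) = (q θ : ℂ) * wk (ψ θ) := by
    intro θ
    have e : (fun u => H (1, E u)) = fun u => FF 0 1 (Real.cos (ψ u)) (Real.sin (ψ u)) := by
      funext u
      rw [(hab u).2, hψa, hψb]
    have hd := hD 1 θ
    rw [e] at hd
    have hc := (hψ θ).cos
    have hs := (hψ θ).sin
    have hx := hc.mul (((hs.pow 2).const_mul (4 * 1 ^ 2)).const_sub 1)
    have hy := hs.mul (((hc.pow 2).const_mul (4 * 0 ^ 2)).const_sub 1)
    have e1 := (hda_x hd).unique hx
    have e2 := (hda_y hd).unique hy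
    have := Real.sin_sq_add_cos_sq (ψ θ)
    apply Complex.ext
    · simp only [w, wk, Complex.re_ofReal_mul]
      rw [e1]
      simp
      linear_combination (-8 * Real.sin (ψ θ) * q θ) * this
    · simp only [w, wk, Complex.im_ofReal_mul]
      rw [e2]
      simp
      ring
  have hqne : ∀ θ, q θ ≠ 0 := by
    intro θ hz
    apply hwne 1 hI1 θ
    rw [hw1, hz]
    simp
  have hcos : Real.cos (ψ (2 * Real.pi)) = Real.cos (ψ 0) := by
    rw [← hψa, ← hψa]; simp only [a, hE2]
  have hsin : Real.sin (ψ (2 * Real.pi)) = Real.sin (ψ 0) := by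
    rw [← hψb, ← hψb]; simp only [b, hE2]
  have hwk2 : wk (ψ (2 * Real.pi)) = wk (ψ 0) := by simp only [wk, hcos, hsin]
  have hq2 : q (2 * Real.pi) = q 0 := by
    have := hper 1
    rw [hw1, hw1, hwk2] at this
    exact_mod_cast mul_right_cancel₀ (wk_ne _) this
  have hrot1 : ∫ θ in (0 : ℝ)..(2 * Real.pi), w2 (1, θ) / w (1, θ)
      = -((ψ (2 * Real.pi) - ψ 0 : ℝ) * Complex.I) := by
    have hd : ∀ θ ∈ Set.uIcc 0 (2 * Real.pi), HasDerivAt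
        (fun u => FLog (-Complex.I) wk (ψ u) + (Real.log (q u) : ℂ)) (w2 (1, θ) / w (1, θ)) θ := by
      intro θ _
      obtain ⟨d, hd⟩ := wk_hasDerivAt (ψ θ)
      obtain ⟨d', hd'⟩ := hqd θ
      have f1 := (FLog_hasDerivAt hd (neg_ne_zero.2 Complex.I_ne_zero) (wk_ne _) (wk_slit _)).scomp θ (hψ θ)
      have f2 := (hd'.log (hqne θ)).ofReal_comp
      have f3 := hd'.ofReal_comp.mul (hd.scomp θ (hψ θ))
      have f4 := (hw 1 θ).unique (f3.congr_of_eventuallyEq (.of_forall hw1))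
      have f5 := f1.add f2
      convert! f5 using 1
      rw [f4, hw1]
      have n1 := wk_ne (ψ θ)
      have n2 : (q θ : ℂ) ≠ 0 := by exact_mod_cast hqne θ
      simp only [Complex.real_smul, Function.comp]
      change _ = (q θ : ℂ) * _ + _
      change (_ + _ * ((q θ : ℂ) * d)) / _ = _
      push_cast
      field_simp
      ring
    rw [intervalIntegral.integral_eq_sub_of_hasDerivAt hd (hIntg 1 hI1)]
    unfold FLog
    rw [hq2, exp_I_eq, exp_I_eq, hcos, hsin, hwk2]
    push_cast
    ring
  have hψ2 : ψ (2 * Real.pi) - ψ 0 = 2 * Real.pi := by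
    rw [hrot0, hrot1] at hrot
    have := congrArg Complex.im hrot
    simp at this
    linarith
  have hpi := Real.pi_pos
  have hqc : Continuous q := continuous_iff_continuousAt.2 fun θ => (hqd θ).choose_spec.continuousAt
  have hqpos : ∀ θ, 0 < q θ := by
    obtain ⟨c, -, hc⟩ := exists_hasDerivAt_eq_slope ψ q (a := 0) (b := 2 * Real.pi) (by positivity)
      (fun u _ => (hψ u).continuousAt.continuousWithinAt) (fun u _ => hψ u)
    have hcpos : 0 < q c := by
      rw [hc, hψ2]
      apply div_pos <;> linarith
    intro θ
    by_contra hneg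
    have hz : (0 : ℝ) ∈ Set.range q := mem_range_of_exists_le_of_exists_ge hqc ⟨θ, not_lt.1 hneg⟩ ⟨c, hcpos.le⟩
    obtain ⟨u, hu⟩ := hz
    exact hqne u hu
  refine sign_inv (fun t s => H (t, s)) D hGc hDc hD hK ?_ ?_
  · rintro θ η ⟨⟨l1, l2⟩, ⟨r1, r2⟩, hlt⟩
    simp only [h0, K1_E] at l1 l2 r1 r2 hlt
    rw [hD0]
    simp only
    have hs : Real.sin θ = 0 := by
      linear_combination (1 - 4 / 3 * Real.cos θ ^ 2) * l1 + 16 / 3 * Real.cos θ * l2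
    have hcs := Real.sin_sq_add_cos_sq θ
    have hle := Real.cos_le_one η
    have : (Real.cos θ - 1) * (Real.cos θ + 1) = 0 := by
      rw [hs] at hcs
      linear_combination hcs
    rcases mul_eq_zero.1 this with h | h
    · linarith
    · have : Real.cos θ = -1 := by linarith
      rw [this]; norm_num
  · rintro θ η ⟨⟨l1, l2⟩, ⟨r1, r2⟩, hlt⟩
    simp only [(hab _).2, hψa, hψb, FF] at l1 l2 r1 r2 hlt
    have hs : Real.sin (ψ θ) = 0 := by linear_combination l1
    have hs' : Real.sin (ψ η) = 0 := by linear_combination r1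
    rw [hs, hs'] at hlt
    have hcs := Real.sin_sq_add_cos_sq (ψ θ)
    have hle := Real.cos_le_one (ψ η)
    have hy : (D (1, θ)).2.1 = q θ * Real.cos (ψ θ) := by
      have := congrArg Complex.im (hw1 θ)
      simpa only [w, wk, Complex.im_ofReal_mul] using this
    rw [hy]
    have : (Real.cos (ψ θ) - 1) * (Real.cos (ψ θ) + 1) = 0 := by
      rw [hs] at hcs
      linear_combination hcs
    rcases mul_eq_zero.1 this with h | h
    · linarith
    · have : Real.cos (ψ θ) = -1 := by linarith
      rw [this]
      linarith [hqpos θ]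

/-- There exist two strongly invertible Legendrian unknots which are Legendrian isotopic
and equivalent as strongly invertible knots, but not equivalent as strongly invertible
Legendrian knots. -/
theorem exists_inequivalent_strongly_invertible_legendrian_unknots :
    ∃ K₁ K₂ : S1 → R3,
      -- (a) both are strongly invertible Legendrian knots
      (IsStronglyInvertibleKnot K₁ ∧ IsLegendrianKnot K₁) ∧
      (IsStronglyInvertibleKnot K₂ ∧ IsLegendrianKnot K₂) ∧
      -- (b) both are unknotted
      (∃ H : ℝ × S1 → R3, IsSmoothFamily H ∧
        (∀ s, H (0, s) = K₁ s) ∧ (∀ s, H (1, s) = roundCircle s) ∧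
        ∀ t ∈ Set.Icc (0 : ℝ) 1, IsKnot fun s => H (t, s)) ∧
      (∃ H : ℝ × S1 → R3, IsSmoothFamily H ∧
        (∀ s, H (0, s) = K₂ s) ∧ (∀ s, H (1, s) = roundCircle s) ∧
        ∀ t ∈ Set.Icc (0 : ℝ) 1, IsKnot fun s => H (t, s)) ∧
      -- (c) K₁ and K₂ are Legendrian isotopic (as unoriented Legendrian knots)
      (∃ H : ℝ × S1 → R3, IsSmoothFamily H ∧
        (∀ s, H (0, s) = K₁ s) ∧ (∀ s, H (1, s) = K₂ s) ∧
        ∀ t ∈ Set.Icc (0 : ℝ) 1, IsLegendrianKnot fun s => H (t, s)) ∧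
      -- (d) K₁ and K₂ are equivalent as strongly invertible knots
      (∃ H : ℝ × S1 → R3, IsSmoothFamily H ∧
        (∀ s, H (0, s) = K₁ s) ∧ (∀ s, H (1, s) = K₂ s) ∧
        ∀ t ∈ Set.Icc (0 : ℝ) 1, IsStronglyInvertibleKnot fun s => H (t, s)) ∧
      -- (e) but K₁ and K₂ are not equivalent as strongly invertible Legendrian knots
      ¬ ∃ H : ℝ × S1 → R3, IsSmoothFamily H ∧
          (∀ t ∈ Set.Icc (0 : ℝ) 1,
            IsStronglyInvertibleKnot (fun s => H (t, s)) ∧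
            IsLegendrianKnot fun s => H (t, s)) ∧
          (∀ s, H (0, s) = K₁ s) ∧
          Set.range (fun s => H (1, s)) = Set.range K₂ := by
  refine ⟨HH 1 0 0, HH 0 1 (Real.pi / 2), ⟨HH_si (Or.inr rfl) _, ?_⟩, ⟨HH_si (Or.inl rfl) _, ?_⟩,
    part_b1, part_b2, part_c, part_d, part_e⟩
  · simpa only [zero_mul, RR_zero] using RR_K1_isLegendrian 0
  · simpa only [RR_one] using RR_K1_isLegendrian 1
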